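/- Theorem 3.3 (conservation of the Energy–Momentum tensor): let L₀ : ℝ → (Fin D → ℝ) → ℝ be a smooth spacetime-independent Lagrangian density with arguments (u, p), and let φ be a smooth solution of the Euler–Lagrange equation for the Lagrangian density L(x,u,p) := L₀(u,p). Define the Energy–Momentum tensor T^μ_ν x := L₀_{p_μ}(φ x, ∇φ x) · ∂_ν φ x − (if μ = ν then L₀(φ x, ∇φ x) else 0). Then for each fixed ν, the current μ ↦ T^μ_ν is conserved: Σ_μ ∂_μ (fun y ↦ T^μ_ν y) x = 0 for all x. -/

import Mathlib

open scoped BigOperators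

noncomputable section

/-- Spacetime partial derivative `∂_μ F x`. -/
def pd {D : ℕ} (F : (Fin D → ℝ) → ℝ) (μ : Fin D) (x : Fin D → ℝ) : ℝ :=
  fderiv ℝ F x (Pi.single μ 1)

/-- Gradient of a field, `∇φ x = fun ν ↦ ∂_ν φ x`. -/
def grad {D : ℕ} (φ : (Fin D → ℝ) → ℝ) (x : Fin D → ℝ) : Fin D → ℝ :=
  fun ν => pd φ ν x

/-- Partial derivative of a spacetime-independent Lagrangian in `u`. -/
def Lu0 {D : ℕ} (L₀ : ℝ → (Fin D → ℝ) → ℝ) (u : ℝ) (p : Fin D → ℝ) : ℝ :=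
  deriv (fun v => L₀ v p) u

/-- Partial derivative of a spacetime-independent Lagrangian in the μ-th component of `p`. -/
def Lp0 {D : ℕ} (L₀ : ℝ → (Fin D → ℝ) → ℝ) (μ : Fin D) (u : ℝ) (p : Fin D → ℝ) : ℝ :=
  fderiv ℝ (L₀ u) p (Pi.single μ 1)

/-!
The divergence of the energy–momentum tensor is computed without using the field equation. The
chain rule gives `∂_ν (L₀(φ, ∇φ)) = L₀_u ∂_ν φ + Σ_μ L₀_{p_μ} ∂_ν ∂_μ φ`, and since second
derivatives commute its last sum cancels against the terms `L₀_{p_μ} ∂_μ ∂_ν φ` of the product rule.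
What remains is `(Σ_μ ∂_μ L₀_{p_μ} - L₀_u) ∂_ν φ`, which the Euler–Lagrange equation annihilates.
-/

section PartialDerivatives

variable {D : ℕ} {F G : (Fin D → ℝ) → ℝ} {x : Fin D → ℝ}

theorem pd_sub (hF : DifferentiableAt ℝ F x) (hG : DifferentiableAt ℝ G x) (μ : Fin D) :
    pd (fun y => F y - G y) μ x = pd F μ x - pd G μ x := by
  simp only [pd, fderiv_fun_sub hF hG, sub_apply]

theorem pd_mul (hF : DifferentiableAt ℝ F x) (hG : DifferentiableAt ℝ G x) (μ : Fin D) :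
    pd (fun y => F y * G y) μ x = F x * pd G μ x + pd F μ x * G x := by
  simp [pd, fderiv_fun_mul hF hG, mul_comm]

theorem contDiffAt_pd {m n : WithTop ℕ∞} (hF : ContDiffAt ℝ n F x) (hmn : m + 1 ≤ n)
    (μ : Fin D) : ContDiffAt ℝ m (pd F μ) x :=
  (hF.fderiv_right hmn).clm_apply contDiffAt_const

theorem contDiffAt_grad {m n : WithTop ℕ∞} (hF : ContDiffAt ℝ n F x) (hmn : m + 1 ≤ n) :
    ContDiffAt ℝ m (grad F) x :=
  contDiffAt_pi.2 (contDiffAt_pd hF hmn)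

theorem pd_pd_eq_fderiv_fderiv (hF : DifferentiableAt ℝ (fderiv ℝ F) x) (μ ν : Fin D) :
    pd (pd F μ) ν x = fderiv ℝ (fderiv ℝ F) x (Pi.single ν 1) (Pi.single μ 1) := by
  have pd_eq : pd F μ = fun y => fderiv ℝ F y (Pi.single μ 1) := rfl
  rw [pd, pd_eq, fderiv_clm_apply hF (differentiableAt_const _)]
  simp

theorem pd_pd_comm (hF : ContDiffAt ℝ 2 F x) (μ ν : Fin D) :
    pd (pd F μ) ν x = pd (pd F ν) μ x := by
  have hF' : DifferentiableAt ℝ (fderiv ℝ F) x :=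
    (hF.fderiv_right (m := 1) one_add_one_eq_two.le).differentiableAt one_ne_zero
  rw [pd_pd_eq_fderiv_fderiv hF', pd_pd_eq_fderiv_fderiv hF']
  exact (hF.isSymmSndFDerivAt (by simp)).eq _ _

end PartialDerivatives

section Lagrangian

variable {N : ℕ} {L₀ : ℝ → (Fin N → ℝ) → ℝ} {u : ℝ} {p : Fin N → ℝ}

theorem Lu0_eq_fderiv_uncurry (hL : DifferentiableAt ℝ (Function.uncurry L₀) (u, p)) :
    Lu0 L₀ u p = fderiv ℝ (Function.uncurry L₀) (u, p) (1, 0) := by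
  have chain := hL.hasFDerivAt.comp_hasDerivAt u ((hasDerivAt_id u).prodMk (hasDerivAt_const u p))
  exact chain.deriv

theorem fderiv_eq_fderiv_uncurry (hL : DifferentiableAt ℝ (Function.uncurry L₀) (u, p))
    (v : Fin N → ℝ) :
    fderiv ℝ (L₀ u) p v = fderiv ℝ (Function.uncurry L₀) (u, p) (0, v) := by
  have chain : HasFDerivAt (L₀ u) _ p := hL.hasFDerivAt.comp p (hasFDerivAt_prodMk_right u p)
  simp [chain.fderiv]

theorem fderiv_uncurry_apply (hL : DifferentiableAt ℝ (Function.uncurry L₀) (u, p))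
    (a : ℝ) (v : Fin N → ℝ) :
    fderiv ℝ (Function.uncurry L₀) (u, p) (a, v) =
      Lu0 L₀ u p * a + ∑ i, Lp0 L₀ i u p * v i := by
  have split_direction : (a, v) = a • ((1 : ℝ), (0 : Fin N → ℝ)) + (0, v) := by simp
  have sum_coordinates : fderiv ℝ (L₀ u) p v = ∑ i, v i • Lp0 L₀ i u p := by
    conv_lhs => rw [pi_eq_sum_univ' v, map_sum]
    simp only [map_smul, Lp0]
  rw [split_direction, map_add, map_smul, ← Lu0_eq_fderiv_uncurry hL,
    ← fderiv_eq_fderiv_uncurry hL, sum_coordinates]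
  simp only [smul_eq_mul, mul_comm]

theorem contDiffAt_Lp0 {m n : WithTop ℕ∞} (hL : ContDiffAt ℝ n (Function.uncurry L₀) (u, p))
    (hmn : m + 1 ≤ n) (i : Fin N) :
    ContDiffAt ℝ m (fun q : ℝ × (Fin N → ℝ) => Lp0 L₀ i q.1 q.2) (u, p) := by
  have hL₁ : ContDiffAt ℝ 1 (Function.uncurry L₀) (u, p) := hL.of_le (le_add_self.trans hmn)
  have hfderiv : ContDiffAt ℝ m
      (fun q => fderiv ℝ (Function.uncurry L₀) q (0, Pi.single i 1)) (u, p) :=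
    (hL.fderiv_right hmn).clm_apply contDiffAt_const
  refine hfderiv.congr_of_eventuallyEq ?_
  filter_upwards [hL₁.eventually (by simp)] with q hq
  exact fderiv_eq_fderiv_uncurry (hq.differentiableAt one_ne_zero) _

theorem pd_lagrangian_comp {D : ℕ} {φ : (Fin D → ℝ) → ℝ} {P : (Fin D → ℝ) → Fin N → ℝ}
    {x : Fin D → ℝ} (hL : DifferentiableAt ℝ (Function.uncurry L₀) (φ x, P x))
    (hφ : DifferentiableAt ℝ φ x) (hP : DifferentiableAt ℝ P x) (ν : Fin D) :
    pd (fun y => L₀ (φ y) (P y)) ν x =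
      Lu0 L₀ (φ x) (P x) * pd φ ν x +
        ∑ i, Lp0 L₀ i (φ x) (P x) * pd (fun y => P y i) ν x := by
  have chain : HasFDerivAt (fun y => L₀ (φ y) (P y)) _ x :=
    HasFDerivAt.comp (g := Function.uncurry L₀) x hL.hasFDerivAt
      (hφ.hasFDerivAt.prodMk hP.hasFDerivAt)
  have component (i : Fin N) : pd (fun y => P y i) ν x = fderiv ℝ P x (Pi.single ν 1) i := by
    simp [pd, fderiv_apply hP i]
  simp only [component]
  rw [pd, chain.fderiv]
  exact fderiv_uncurry_apply hL _ _

end Lagrangian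

section EnergyMomentum

variable {D : ℕ}

/-- The canonical momentum density `L₀_{p_μ}(φ, ∇φ)` conjugate to `∂_μ φ`, as a function on
spacetime. -/
def canonicalMomentum (L₀ : ℝ → (Fin D → ℝ) → ℝ) (φ : (Fin D → ℝ) → ℝ) (μ : Fin D)
    (x : Fin D → ℝ) : ℝ :=
  Lp0 L₀ μ (φ x) (grad φ x)

/-- The canonical energy–momentum tensor `T^μ_ν = L₀_{p_μ}(φ, ∇φ) ∂_ν φ - δ^μ_ν L₀(φ, ∇φ)`, whose
`ν`-th column is the Noether current of translations in the direction `ν`. The first index is the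
upper one. -/
def energyMomentumTensor (L₀ : ℝ → (Fin D → ℝ) → ℝ) (φ : (Fin D → ℝ) → ℝ) (μ ν : Fin D)
    (x : Fin D → ℝ) : ℝ :=
  canonicalMomentum L₀ φ μ x * pd φ ν x - (if μ = ν then L₀ (φ x) (grad φ x) else 0)

variable {L₀ : ℝ → (Fin D → ℝ) → ℝ} {φ : (Fin D → ℝ) → ℝ} {x : Fin D → ℝ}

theorem contDiffAt_canonicalMomentum {m n : WithTop ℕ∞}
    (hL : ContDiffAt ℝ n (Function.uncurry L₀) (φ x, grad φ x)) (hφ : ContDiffAt ℝ n φ x)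
    (hmn : m + 1 ≤ n) (μ : Fin D) : ContDiffAt ℝ m (canonicalMomentum L₀ φ μ) x :=
  ContDiffAt.comp (g := fun q : ℝ × (Fin D → ℝ) => Lp0 L₀ μ q.1 q.2) x
    (contDiffAt_Lp0 hL hmn μ) ((hφ.of_le (le_self_add.trans hmn)).prodMk (contDiffAt_grad hφ hmn))

theorem pd_energyMomentumTensor {μ ν : Fin D}
    (hπ : DifferentiableAt ℝ (canonicalMomentum L₀ φ μ) x)
    (hφ' : DifferentiableAt ℝ (pd φ ν) x)
    (hLφ : DifferentiableAt ℝ (fun y => L₀ (φ y) (grad φ y)) x) :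
    pd (energyMomentumTensor L₀ φ μ ν) μ x =
      canonicalMomentum L₀ φ μ x * pd (pd φ ν) μ x + pd (canonicalMomentum L₀ φ μ) μ x * pd φ ν x -
        (if μ = ν then pd (fun y => L₀ (φ y) (grad φ y)) μ x else 0) := by
  have T_eq : energyMomentumTensor L₀ φ μ ν = fun y =>
      canonicalMomentum L₀ φ μ y * pd φ ν y - (if μ = ν then L₀ (φ y) (grad φ y) else 0) := rfl
  rw [← pd_mul hπ hφ']
  by_cases h : μ = ν
  · subst h
    simpa only [T_eq, if_true] using pd_sub (hπ.fun_mul hφ') hLφ μ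
  · simp only [T_eq, h, if_false, sub_zero]

theorem sum_pd_energyMomentumTensor
    (hL : ContDiffAt ℝ 2 (Function.uncurry L₀) (φ x, grad φ x)) (hφ : ContDiffAt ℝ 2 φ x)
    (ν : Fin D) :
    ∑ μ, pd (energyMomentumTensor L₀ φ μ ν) μ x =
      ((∑ μ, pd (canonicalMomentum L₀ φ μ) μ x) - Lu0 L₀ (φ x) (grad φ x)) * pd φ ν x := by
  have one_add_one_le : (1 + 1 : WithTop ℕ∞) ≤ 2 := one_add_one_eq_two.le
  have hL' : DifferentiableAt ℝ (Function.uncurry L₀) (φ x, grad φ x) :=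
    hL.differentiableAt two_ne_zero
  have hφ' : DifferentiableAt ℝ φ x := hφ.differentiableAt two_ne_zero
  have hgrad : DifferentiableAt ℝ (grad φ) x :=
    (contDiffAt_grad hφ one_add_one_le).differentiableAt one_ne_zero
  have hLφ : DifferentiableAt ℝ (fun y => L₀ (φ y) (grad φ y)) x :=
    DifferentiableAt.comp (g := Function.uncurry L₀) x hL' (hφ'.prodMk hgrad)
  have product_rule (μ : Fin D) := pd_energyMomentumTensor (ν := ν)
    ((contDiffAt_canonicalMomentum hL hφ one_add_one_le μ).differentiableAt one_ne_zero)
    ((contDiffAt_pd hφ one_add_one_le ν).differentiableAt one_ne_zero) hLφ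
  have chain_rule : pd (fun y => L₀ (φ y) (grad φ y)) ν x =
      Lu0 L₀ (φ x) (grad φ x) * pd φ ν x + ∑ μ, canonicalMomentum L₀ φ μ x * pd (pd φ ν) μ x := by
    simp only [pd_pd_comm hφ ν]
    exact pd_lagrangian_comp hL' hφ' hgrad ν
  simp only [product_rule, Finset.sum_sub_distrib, Finset.sum_add_distrib, ← Finset.sum_mul,
    Finset.sum_ite_eq', Finset.mem_univ, if_true, chain_rule]
  ring

theorem energy_momentum_tensor_conserved_general
    (hL : ContDiffAt ℝ 2 (Function.uncurry L₀) (φ x, grad φ x)) (hφ : ContDiffAt ℝ 2 φ x)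
    (hEL : Lu0 L₀ (φ x) (grad φ x) = ∑ μ, pd (canonicalMomentum L₀ φ μ) μ x) (ν : Fin D) :
    ∑ μ, pd (energyMomentumTensor L₀ φ μ ν) μ x = 0 := by
  rw [sum_pd_energyMomentumTensor hL hφ, hEL, sub_self, zero_mul]

end EnergyMomentum

/-- Theorem 3.3: conservation of the Energy–Momentum tensor for
spacetime-independent theories. -/
theorem energy_momentum_tensor_conserved {D : ℕ} (hD : 1 ≤ D)
    (L₀ : ℝ → (Fin D → ℝ) → ℝ)
    (hL : ContDiff ℝ (⊤ : ℕ∞) (fun q : ℝ × (Fin D → ℝ) => L₀ q.1 q.2))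
    (φ : (Fin D → ℝ) → ℝ) (hφ : ContDiff ℝ (⊤ : ℕ∞) φ)
    (hEL : ∀ x, Lu0 L₀ (φ x) (grad φ x) =
      ∑ μ, pd (fun y => Lp0 L₀ μ (φ y) (grad φ y)) μ x) :
    ∀ (ν : Fin D) (x : Fin D → ℝ),
      ∑ μ, pd (fun y =>
        Lp0 L₀ μ (φ y) (grad φ y) * pd φ ν y -
          (if μ = ν then L₀ (φ y) (grad φ y) else 0)) μ x = 0 := by
  have two_le : (2 : WithTop ℕ∞) ≤ (⊤ : ℕ∞) := WithTop.coe_le_coe.2 le_top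
  exact fun ν x => energy_momentum_tensor_conserved_general
    (hL.of_le two_le).contDiffAt (hφ.of_le two_le).contDiffAt (hEL x) ν

end
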